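/- Let α > 0 and let k_l, k_s, d_l, d_s, γ, T_i, T_∞, h₀ be positive constants with ω = √(d_l/d_s). If h₀ > 2^α Γ(α/2 + 1) k_s T_i d_s^{(α−1)/2} / (T_∞ √π), then there exists exactly one x > 0 satisfying equation (24): −(k_s T_i d_s^{(α−1)/2} / (γ d_l^{(α+1)/2})) f₁(x) + (h₀ T_∞ / (γ 2^α d_l^{(α+1)/2})) f₂(x) = x^{α+1}. -/

import Mathlib

noncomputable def poch (a : ℝ) (s : ℕ) : ℝ := ∏ i ∈ Finset.range s, (a + i)

/-- Kummer's confluent hypergeometric function `M(a,b,z)`,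
defined by the everywhere-convergent series `M(a,b,z) = Σ_{s} (a)_s z^s / ((b)_s s!)`. -/
noncomputable def kummerM (a b z : ℝ) : ℝ :=
  ∑' s : ℕ, poch a s / (poch b s * (Nat.factorial s)) * z ^ s

/-- Tricomi's confluent hypergeometric function
`U(a,b,z) = (1/Γ(a)) ∫_0^∞ e^{−z t} t^{a−1} (1+t)^{b−a−1} dt`. -/
noncomputable def tricomiU (a b z : ℝ) : ℝ :=
  (1 / Real.Gamma a) *
    ∫ t in Set.Ioi (0:ℝ), Real.exp (-z * t) * t ^ (a - 1) * (1 + t) ^ (b - a - 1)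

/-! Written as `f x = x ^ p` with `f = -A f₁ + B f₂`, the equation has a left-hand side that is
continuous and decreasing on `[0, ∞)`: as `x` grows, `U(a, b, ω²x²)` decreases and the `M` terms
increase. The right-hand side is continuous and strictly increasing from `0` to `∞`, so the two
sides meet exactly once at a positive point as soon as `f 0 > 0`. The series give `M(a, b, 0) = 1`,
and the substitution `u = t / (1 + t)` turns the integral for `U(a, b, 0)` into a beta integral,
whence `U(a, b, 0) = Γ(1 - b) / Γ(a - b + 1)`. Thus `f 0 > 0` reads
`A Γ(a - b + 1) / Γ(1 - b) < B`, which is the assumption on `h₀`. -/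

open Filter MeasureTheory Set Topology

theorem existsUnique_gt_eq_of_antitoneOn_of_strictMonoOn {X Y : Type*}
    [ConditionallyCompleteLinearOrder X] [DenselyOrdered X] [TopologicalSpace X] [OrderTopology X]
    [LinearOrder Y] [TopologicalSpace Y] [OrderClosedTopology Y] {f g : X → Y} {a : X}
    (hfc : ContinuousOn f (Ici a)) (hf : AntitoneOn f (Ici a))
    (hgc : ContinuousOn g (Ici a)) (hg : StrictMonoOn g (Ici a)) (hg_top : Tendsto g atTop atTop)
    (h : g a < f a) : ∃! x, a < x ∧ f x = g x := by
  obtain ⟨b, hfb, hab⟩ :=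
    ((hg_top.eventually_ge_atTop (f a)).and (eventually_ge_atTop a)).exists
  obtain ⟨x, hx, hfgx⟩ := isPreconnected_Ici.intermediate_value₂ self_mem_Ici hab hgc hfc h.le
    ((hf self_mem_Ici hab hab).trans hfb)
  have ne_of_lt {y z : X} (hy : a ≤ y) (hyz : y < z) (hfgy : f y = g y) : f z ≠ g z :=
    (((hf hy (hy.trans hyz.le) hyz.le).trans_eq hfgy).trans_lt (hg hy (hy.trans hyz.le) hyz)).ne
  have hax : a < x := hx.lt_of_ne fun hax => h.ne (hax ▸ hfgx)
  refine ⟨x, ⟨hax, hfgx.symm⟩, fun y ⟨hay, hfgy⟩ => ?_⟩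
  by_contra hne
  rcases lt_or_gt_of_ne hne with hyx | hxy
  · exact ne_of_lt hay.le hyx hfgy hfgx.symm
  · exact ne_of_lt hax.le hxy hfgx.symm hfgy

section Kummer

theorem poch_nonneg {a : ℝ} (ha : 0 ≤ a) (s : ℕ) : 0 ≤ poch a s :=
  Finset.prod_nonneg fun _ _ => by positivity

theorem poch_succ (a : ℝ) (s : ℕ) : poch a (s + 1) = poch a s * (a + s) :=
  Finset.prod_range_succ _ _

/-- The coefficient `(a)_s / ((b)_s s!)` of `z ^ s` in the series of `M(a, b, z)`. -/
noncomputable def kummerCoeff (a b : ℝ) (s : ℕ) : ℝ :=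
  poch a s / (poch b s * s.factorial)

theorem kummerCoeff_nonneg {a b : ℝ} (ha : 0 ≤ a) (hb : 0 < b) (s : ℕ) : 0 ≤ kummerCoeff a b s :=
  div_nonneg (poch_nonneg ha s) (mul_nonneg (poch_nonneg hb.le s) (Nat.cast_nonneg _))

theorem kummerCoeff_succ (a b : ℝ) (s : ℕ) :
    kummerCoeff a b (s + 1) = kummerCoeff a b s * ((a + s) / (b + s) * (1 / ((s : ℝ) + 1))) := by
  simp only [kummerCoeff, poch_succ, Nat.factorial_succ, Nat.cast_mul, Nat.cast_succ,
    div_eq_mul_inv, mul_inv]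
  ring

theorem summable_kummerCoeff_mul_pow (a b z : ℝ) :
    Summable fun s => kummerCoeff a b s * z ^ s := by
  have ratio_tendsto :
      Tendsto (fun s : ℕ => (a + s) / (b + s) * (1 / ((s : ℝ) + 1)) * z) atTop (𝓝 0) := by
    simpa using ((tendsto_add_mul_div_add_mul_atTop_nhds a b 1 one_ne_zero).mul
      tendsto_one_div_add_atTop_nhds_zero_nat).mul_const z
  refine summable_of_ratio_norm_eventually_le one_half_lt_one ?_
  filter_upwards [ratio_tendsto.norm.eventually_le_const (by norm_num : ‖(0 : ℝ)‖ < 1 / 2)]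
    with s hs
  calc ‖kummerCoeff a b (s + 1) * z ^ (s + 1)‖
      = ‖(a + s) / (b + s) * (1 / ((s : ℝ) + 1)) * z‖ * ‖kummerCoeff a b s * z ^ s‖ := by
        rw [← norm_mul, kummerCoeff_succ]
        ring_nf
    _ ≤ 1 / 2 * ‖kummerCoeff a b s * z ^ s‖ := by gcongr

theorem kummerM_zero (a b : ℝ) : kummerM a b 0 = 1 := by
  unfold kummerM
  rw [tsum_eq_single 0 fun s hs => by simp [hs]]
  simp [poch]

theorem continuous_kummerM (a b : ℝ) : Continuous (kummerM a b) := by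
  refine continuous_iff_continuousAt.2 fun x => ?_
  have hsum : Summable fun s => ‖kummerCoeff a b s * (|x| + 1) ^ s‖ :=
    (summable_kummerCoeff_mul_pow a b (|x| + 1)).norm
  have hcont : ContinuousOn (kummerM a b) (Icc (-(|x| + 1)) (|x| + 1)) := by
    refine continuousOn_tsum (fun s => by fun_prop) hsum fun s y hy => ?_
    change ‖kummerCoeff a b s * y ^ s‖ ≤ _
    rw [norm_mul, norm_mul, norm_pow, norm_pow]
    gcongr
    exact (abs_le.2 hy).trans (le_abs_self _)
  exact hcont.continuousAt (Icc_mem_nhds (by linarith [neg_abs_le x]) (by linarith [le_abs_self x]))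

theorem monotoneOn_kummerM {a b : ℝ} (ha : 0 ≤ a) (hb : 0 < b) :
    MonotoneOn (kummerM a b) (Ici 0) := fun z hz w _ hzw =>
  (summable_kummerCoeff_mul_pow a b z).tsum_le_tsum
    (fun s => mul_le_mul_of_nonneg_left (pow_le_pow_left₀ hz hzw s) (kummerCoeff_nonneg ha hb s))
    (summable_kummerCoeff_mul_pow a b w)

theorem one_le_kummerM {a b z : ℝ} (ha : 0 ≤ a) (hb : 0 < b) (hz : 0 ≤ z) : 1 ≤ kummerM a b z :=
  kummerM_zero a b ▸ monotoneOn_kummerM ha hb self_mem_Ici hz hz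

end Kummer

section Beta

variable {u v : ℝ}

theorem ofReal_rpow_mul_one_sub_rpow (u v : ℝ) {x : ℝ} (hx : x ∈ Ioo (0 : ℝ) 1) :
    ((x ^ (u - 1) * (1 - x) ^ (v - 1) : ℝ) : ℂ) =
      (x : ℂ) ^ ((u : ℂ) - 1) * (1 - (x : ℂ)) ^ ((v : ℂ) - 1) := by
  push_cast [Complex.ofReal_cpow hx.1.le, Complex.ofReal_cpow (sub_nonneg.2 hx.2.le)]
  rfl

theorem integrableOn_rpow_mul_one_sub_rpow (hu : 0 < u) (hv : 0 < v) :
    IntegrableOn (fun x : ℝ => x ^ (u - 1) * (1 - x) ^ (v - 1)) (Ioo 0 1) := by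
  have h := Complex.betaIntegral_convergent (u := u) (v := v) (by simpa) (by simpa)
  rw [intervalIntegrable_iff_integrableOn_Ioo_of_le zero_le_one] at h
  exact IntegrableOn.congr_fun h.re
    (fun x hx => by simp [← ofReal_rpow_mul_one_sub_rpow u v hx]) measurableSet_Ioo

theorem integral_rpow_mul_one_sub_rpow (hu : 0 < u) (hv : 0 < v) :
    ∫ x in Ioo (0 : ℝ) 1, x ^ (u - 1) * (1 - x) ^ (v - 1) = ProbabilityTheory.beta u v := by
  rw [ProbabilityTheory.beta_eq_betaIntegralReal u v hu hv, Complex.betaIntegral,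
    intervalIntegral.integral_of_le zero_le_one, integral_Ioc_eq_integral_Ioo,
    ← setIntegral_congr_fun measurableSet_Ioo fun x hx => ofReal_rpow_mul_one_sub_rpow u v hx,
    integral_complex_ofReal, Complex.ofReal_re]

theorem bijOn_div_one_add : BijOn (fun t : ℝ => t / (1 + t)) (Ioi 0) (Ioo 0 1) := by
  refine InvOn.bijOn (f' := fun x => x / (1 - x)) ⟨fun t ht => ?_, fun x hx => ?_⟩
    (fun t ht => ⟨?_, ?_⟩) fun x hx => div_pos hx.1 (sub_pos.2 hx.2)
  · have : 1 + t ≠ 0 := (add_pos one_pos ht).ne'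
    simp only
    field_simp
    ring
  · have : 1 - x ≠ 0 := (sub_pos.2 hx.2).ne'
    simp only
    field_simp
    ring
  · exact div_pos ht (add_pos one_pos ht)
  · exact (div_lt_one (add_pos one_pos ht)).2 (lt_one_add t)

theorem hasDerivAt_div_one_add {t : ℝ} (ht : 1 + t ≠ 0) :
    HasDerivAt (fun t : ℝ => t / (1 + t)) (1 / (1 + t) ^ 2) t := by
  refine ((hasDerivAt_id' t).fun_div ((hasDerivAt_id' t).const_add 1) ht).congr_deriv ?_
  ring

theorem abs_deriv_smul_beta_integrand_comp (u v : ℝ) {t : ℝ} (ht : 0 < t) :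
    |1 / (1 + t) ^ 2| • ((t / (1 + t)) ^ (u - 1) * (1 - t / (1 + t)) ^ (v - 1)) =
      t ^ (u - 1) * (1 + t) ^ (-(u + v)) := by
  have ht' : 0 < 1 + t := add_pos one_pos ht
  have one_sub : 1 - t / (1 + t) = (1 + t)⁻¹ := by
    field_simp
    ring
  have exponent : -(u + v) = -(2 : ℕ) + -(u - 1) + -(v - 1) := by
    push_cast
    ring
  rw [abs_of_pos (by positivity), smul_eq_mul, one_sub, Real.div_rpow ht.le ht'.le,
    Real.inv_rpow ht'.le, exponent, Real.rpow_add ht', Real.rpow_add ht', Real.rpow_neg ht'.le,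
    Real.rpow_neg ht'.le, Real.rpow_neg ht'.le, Real.rpow_natCast]
  ring

theorem integrableOn_rpow_mul_one_add_rpow (hu : 0 < u) (hv : 0 < v) :
    IntegrableOn (fun t : ℝ => t ^ (u - 1) * (1 + t) ^ (-(u + v))) (Ioi 0) := by
  have h := integrableOn_rpow_mul_one_sub_rpow hu hv
  rw [← bijOn_div_one_add.image_eq, integrableOn_image_iff_integrableOn_abs_deriv_smul
    measurableSet_Ioi
    (fun t ht => (hasDerivAt_div_one_add (add_pos one_pos ht).ne').hasDerivWithinAt)
    bijOn_div_one_add.injOn] at h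
  exact h.congr_fun (fun t ht => abs_deriv_smul_beta_integrand_comp u v ht) measurableSet_Ioi

theorem integral_rpow_mul_one_add_rpow (hu : 0 < u) (hv : 0 < v) :
    ∫ t in Ioi (0 : ℝ), t ^ (u - 1) * (1 + t) ^ (-(u + v)) = ProbabilityTheory.beta u v := by
  rw [← integral_rpow_mul_one_sub_rpow hu hv, ← bijOn_div_one_add.image_eq,
    integral_image_eq_integral_abs_deriv_smul measurableSet_Ioi
      (fun t ht => (hasDerivAt_div_one_add (add_pos one_pos ht).ne').hasDerivWithinAt)
      bijOn_div_one_add.injOn]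
  exact setIntegral_congr_fun measurableSet_Ioi
    fun t ht => (abs_deriv_smul_beta_integrand_comp u v ht).symm

end Beta

section Tricomi

/-- The integrand `e^{-zt} t^{a-1} (1+t)^{b-a-1}` of the Laplace integral defining `U(a, b, z)`. -/
noncomputable def tricomiIntegrand (a b z t : ℝ) : ℝ :=
  Real.exp (-z * t) * t ^ (a - 1) * (1 + t) ^ (b - a - 1)

variable {a b z w t : ℝ}

theorem tricomiIntegrand_pos (a b z : ℝ) (ht : 0 < t) : 0 < tricomiIntegrand a b z t := by
  unfold tricomiIntegrand
  positivity

theorem tricomiIntegrand_le_of_le (a b : ℝ) (ht : 0 < t) (hzw : z ≤ w) :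
    tricomiIntegrand a b w t ≤ tricomiIntegrand a b z t := by
  unfold tricomiIntegrand
  gcongr

theorem measurable_tricomiIntegrand (a b z : ℝ) : Measurable (tricomiIntegrand a b z) := by
  unfold tricomiIntegrand
  fun_prop

theorem ae_norm_tricomiIntegrand_le (a b : ℝ) (hz : 0 ≤ z) :
    ∀ᵐ t ∂volume.restrict (Ioi 0), ‖tricomiIntegrand a b z t‖ ≤ tricomiIntegrand a b 0 t := by
  filter_upwards [ae_restrict_mem measurableSet_Ioi] with t ht
  rw [Real.norm_of_nonneg (tricomiIntegrand_pos a b z ht).le]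
  exact tricomiIntegrand_le_of_le a b ht hz

theorem tricomiIntegrand_zero (a b : ℝ) :
    tricomiIntegrand a b 0 = fun t => t ^ (a - 1) * (1 + t) ^ (-(a + (1 - b))) := by
  ext t
  rw [tricomiIntegrand, neg_zero, zero_mul, Real.exp_zero, one_mul]
  ring_nf

theorem integrableOn_tricomiIntegrand_zero (ha : 0 < a) (hb : b < 1) :
    IntegrableOn (tricomiIntegrand a b 0) (Ioi 0) :=
  tricomiIntegrand_zero a b ▸ integrableOn_rpow_mul_one_add_rpow ha (sub_pos.2 hb)

theorem integrableOn_tricomiIntegrand (ha : 0 < a) (hb : b < 1) (hz : 0 ≤ z) :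
    IntegrableOn (tricomiIntegrand a b z) (Ioi 0) :=
  (integrableOn_tricomiIntegrand_zero ha hb).mono'
    (measurable_tricomiIntegrand a b z).aestronglyMeasurable (ae_norm_tricomiIntegrand_le a b hz)

theorem tricomiU_eq_integral_tricomiIntegrand (a b z : ℝ) :
    tricomiU a b z = 1 / Real.Gamma a * ∫ t in Ioi 0, tricomiIntegrand a b z t :=
  rfl

theorem tricomiU_zero (ha : 0 < a) (hb : b < 1) :
    tricomiU a b 0 = Real.Gamma (1 - b) / Real.Gamma (a - b + 1) := by
  have hΓ : Real.Gamma a ≠ 0 := (Real.Gamma_pos_of_pos ha).ne'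
  rw [tricomiU_eq_integral_tricomiIntegrand, tricomiIntegrand_zero,
    integral_rpow_mul_one_add_rpow ha (sub_pos.2 hb), ProbabilityTheory.beta,
    show a + (1 - b) = a - b + 1 by ring]
  field_simp

theorem continuousOn_tricomiU (ha : 0 < a) (hb : b < 1) : ContinuousOn (tricomiU a b) (Ici 0) := by
  refine continuousOn_const.mul (continuousOn_of_dominated
    (fun z _ => (measurable_tricomiIntegrand a b z).aestronglyMeasurable)
    (fun z hz => ae_norm_tricomiIntegrand_le a b hz)
    (integrableOn_tricomiIntegrand_zero ha hb) (Eventually.of_forall fun t => ?_))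
  fun_prop

theorem antitoneOn_tricomiU (ha : 0 < a) (hb : b < 1) : AntitoneOn (tricomiU a b) (Ici 0) :=
  fun _ hz _ hw hzw => mul_le_mul_of_nonneg_left
    (setIntegral_mono_on (integrableOn_tricomiIntegrand ha hb hw)
      (integrableOn_tricomiIntegrand ha hb hz) measurableSet_Ioi
      fun _ ht => tricomiIntegrand_le_of_le a b ht hzw)
    (one_div_nonneg.2 (Real.Gamma_pos_of_pos ha).le)

theorem tricomiU_pos (ha : 0 < a) (hb : b < 1) (hz : 0 ≤ z) : 0 < tricomiU a b z := by
  have support_inter : Function.support (tricomiIntegrand a b z) ∩ Ioi 0 = Ioi 0 :=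
    inter_eq_right.2 fun t ht => (tricomiIntegrand_pos a b z ht).ne'
  rw [tricomiU_eq_integral_tricomiIntegrand]
  refine mul_pos (one_div_pos.2 (Real.Gamma_pos_of_pos ha)) ?_
  rw [setIntegral_pos_iff_support_of_nonneg_ae
    (ae_restrict_of_forall_mem measurableSet_Ioi fun t ht => (tricomiIntegrand_pos a b z ht).le)
    (integrableOn_tricomiIntegrand ha hb hz), support_inter, Real.volume_Ioi]
  exact ENNReal.zero_lt_top

end Tricomi

section Interface

/-- The function `f₁` of equation (24), for arbitrary parameters `a`, `b` of `U`. -/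
noncomputable def tricomiRecip (a b ω x : ℝ) : ℝ :=
  1 / tricomiU a b (x ^ 2 * ω ^ 2)

/-- The function `f₂` of equation (24), for arbitrary parameters of the two `M` functions;
`c` stands for the coefficient `2 √d_l h₀ / k_l`. -/
noncomputable def kummerRecip (a₁ b₁ a₂ b₂ c x : ℝ) : ℝ :=
  1 / (kummerM a₁ b₁ (x ^ 2) + c * x * kummerM a₂ b₂ (x ^ 2))

variable {a b a₁ b₁ a₂ b₂ c : ℝ}

theorem tricomiRecip_zero (ha : 0 < a) (hb : b < 1) (ω : ℝ) :
    tricomiRecip a b ω 0 = Real.Gamma (a - b + 1) / Real.Gamma (1 - b) := by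
  rw [tricomiRecip, zero_pow two_ne_zero, zero_mul, tricomiU_zero ha hb, one_div_div]

theorem monotoneOn_tricomiRecip (ha : 0 < a) (hb : b < 1) (ω : ℝ) :
    MonotoneOn (tricomiRecip a b ω) (Ici 0) := fun x hx y _ hxy =>
  one_div_le_one_div_of_le (tricomiU_pos ha hb (by positivity))
    (antitoneOn_tricomiU ha hb (mem_Ici.2 (by positivity)) (mem_Ici.2 (by positivity))
      (mul_le_mul_of_nonneg_right (pow_le_pow_left₀ hx hxy 2) (sq_nonneg ω)))

theorem continuous_tricomiRecip (ha : 0 < a) (hb : b < 1) (ω : ℝ) :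
    Continuous (tricomiRecip a b ω) :=
  continuous_const.div
    ((continuousOn_tricomiU ha hb).comp_continuous (by fun_prop) fun x => mem_Ici.2 (by positivity))
    fun x => (tricomiU_pos ha hb (by positivity)).ne'

theorem kummerRecip_zero (a₁ b₁ a₂ b₂ c : ℝ) : kummerRecip a₁ b₁ a₂ b₂ c 0 = 1 := by
  simp [kummerRecip, kummerM_zero]

theorem one_le_kummerM_add_mul_kummerM {x : ℝ} (ha₁ : 0 ≤ a₁) (hb₁ : 0 < b₁) (ha₂ : 0 ≤ a₂)
    (hb₂ : 0 < b₂) (hc : 0 ≤ c) (hx : 0 ≤ x) :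
    1 ≤ kummerM a₁ b₁ (x ^ 2) + c * x * kummerM a₂ b₂ (x ^ 2) :=
  le_add_of_le_of_nonneg (one_le_kummerM ha₁ hb₁ (sq_nonneg x))
    (mul_nonneg (mul_nonneg hc hx) (zero_le_one.trans (one_le_kummerM ha₂ hb₂ (sq_nonneg x))))

theorem antitoneOn_kummerRecip (ha₁ : 0 ≤ a₁) (hb₁ : 0 < b₁) (ha₂ : 0 ≤ a₂) (hb₂ : 0 < b₂)
    (hc : 0 ≤ c) : AntitoneOn (kummerRecip a₁ b₁ a₂ b₂ c) (Ici 0) := by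
  intro x (hx : 0 ≤ x) y (hy : 0 ≤ y) hxy
  have hsq : x ^ 2 ≤ y ^ 2 := pow_le_pow_left₀ hx hxy 2
  have hM {a b : ℝ} (ha : 0 ≤ a) (hb : 0 < b) : kummerM a b (x ^ 2) ≤ kummerM a b (y ^ 2) :=
    monotoneOn_kummerM ha hb (sq_nonneg x) (sq_nonneg y) hsq
  have hM₂_nonneg : 0 ≤ kummerM a₂ b₂ (x ^ 2) :=
    zero_le_one.trans (one_le_kummerM ha₂ hb₂ (sq_nonneg x))
  exact one_div_le_one_div_of_le
    (one_pos.trans_le (one_le_kummerM_add_mul_kummerM ha₁ hb₁ ha₂ hb₂ hc hx))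
    (add_le_add (hM ha₁ hb₁) (mul_le_mul (mul_le_mul_of_nonneg_left hxy hc) (hM ha₂ hb₂)
      hM₂_nonneg (mul_nonneg hc hy)))

theorem continuousOn_kummerRecip (ha₁ : 0 ≤ a₁) (hb₁ : 0 < b₁) (ha₂ : 0 ≤ a₂) (hb₂ : 0 < b₂)
    (hc : 0 ≤ c) : ContinuousOn (kummerRecip a₁ b₁ a₂ b₂ c) (Ici 0) := by
  have hM₁ := continuous_kummerM a₁ b₁
  have hM₂ := continuous_kummerM a₂ b₂
  exact continuousOn_const.div (by fun_prop) fun x hx =>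
    (one_pos.trans_le (one_le_kummerM_add_mul_kummerM ha₁ hb₁ ha₂ hb₂ hc hx)).ne'

theorem statement_10_general {A B p : ℝ} (ha : 0 < a) (hb : b < 1) (ha₁ : 0 ≤ a₁) (hb₁ : 0 < b₁)
    (ha₂ : 0 ≤ a₂) (hb₂ : 0 < b₂) (hc : 0 ≤ c) (hp : 0 < p) (hA : 0 ≤ A)
    (hAB : A * (Real.Gamma (a - b + 1) / Real.Gamma (1 - b)) < B) (ω : ℝ) :
    ∃! x : ℝ, 0 < x ∧ -A * tricomiRecip a b ω x + B * kummerRecip a₁ b₁ a₂ b₂ c x = x ^ p := by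
  have hΓ : 0 < Real.Gamma (a - b + 1) := Real.Gamma_pos_of_pos (by linarith)
  have hΓ' : 0 < Real.Gamma (1 - b) := Real.Gamma_pos_of_pos (sub_pos.2 hb)
  have hB : 0 ≤ B := (mul_nonneg hA (div_pos hΓ hΓ').le).trans hAB.le
  refine existsUnique_gt_eq_of_antitoneOn_of_strictMonoOn
    ((continuousOn_const.mul (continuous_tricomiRecip ha hb ω).continuousOn).add
      (continuousOn_const.mul (continuousOn_kummerRecip ha₁ hb₁ ha₂ hb₂ hc)))
    (fun x hx y hy hxy => add_le_add
      (mul_le_mul_of_nonpos_left (monotoneOn_tricomiRecip ha hb ω hx hy hxy) (neg_nonpos.2 hA))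
      (mul_le_mul_of_nonneg_left (antitoneOn_kummerRecip ha₁ hb₁ ha₂ hb₂ hc hx hy hxy) hB))
    (Real.continuous_rpow_const hp.le).continuousOn
    (Real.strictMonoOn_rpow_Ici_of_exponent_pos hp) (tendsto_rpow_atTop hp) ?_
  rw [Real.zero_rpow hp.ne', tricomiRecip_zero ha hb, kummerRecip_zero]
  linarith

end Interface

theorem coeff_mul_Gamma_div_Gamma_lt_coeff {α ks dl ds γ Ti Tinf h₀ : ℝ} (hdl : 0 < dl)
    (hγ : 0 < γ) (hTinf : 0 < Tinf)
    (hcond : h₀ > (2 : ℝ) ^ α * Real.Gamma (α / 2 + 1) * ks * Ti * ds ^ ((α - 1) / 2)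
      / (Tinf * Real.sqrt Real.pi)) :
    ks * Ti * ds ^ ((α - 1) / 2) / (γ * dl ^ ((α + 1) / 2)) *
        (Real.Gamma (α / 2 + 1 / 2 - 1 / 2 + 1) / Real.Gamma (1 - 1 / 2)) <
      h₀ * Tinf / (γ * (2 : ℝ) ^ α * dl ^ ((α + 1) / 2)) := by
  have hγdl : 0 < γ * dl ^ ((α + 1) / 2) := by positivity
  rw [gt_iff_lt, div_lt_iff₀ (by positivity)] at hcond
  rw [add_sub_cancel_right, sub_half, Real.Gamma_one_half_eq, div_mul_div_comm,
    div_lt_div_iff₀ (by positivity) (by positivity)]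
  linarith [mul_lt_mul_of_pos_right hcond hγdl]

/-- if `h₀ > 2^α Γ(α/2+1) k_s T_i d_s^{(α−1)/2} / (T_∞ √π)` then
equation (24) has exactly one positive solution. -/
theorem statement_10 (α kl ks dl ds γ Ti Tinf h₀ : ℝ)
    (hα : 0 < α) (hkl : 0 < kl) (hks : 0 < ks) (hdl : 0 < dl) (hds : 0 < ds)
    (hγ : 0 < γ) (hTi : 0 < Ti) (hTinf : 0 < Tinf) (hh₀ : 0 < h₀)
    (ω : ℝ) (hω : ω = Real.sqrt (dl / ds))
    (hcond : h₀ > (2:ℝ) ^ α * Real.Gamma (α / 2 + 1) * ks * Ti * ds ^ ((α - 1) / 2)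
      / (Tinf * Real.sqrt Real.pi)) :
    ∃! x : ℝ, 0 < x ∧
      -(ks * Ti * ds ^ ((α - 1) / 2) / (γ * dl ^ ((α + 1) / 2))) *
          (1 / tricomiU (α / 2 + 1 / 2) (1 / 2) (x ^ 2 * ω ^ 2))
        + h₀ * Tinf / (γ * (2:ℝ) ^ α * dl ^ ((α + 1) / 2)) *
          (1 / (kummerM (α / 2 + 1 / 2) (1 / 2) (x ^ 2)
                + 2 * Real.sqrt dl * h₀ / kl * x * kummerM (α / 2 + 1) (3 / 2) (x ^ 2)))
        = x ^ (α + 1) := by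
  exact statement_10_general (by positivity) (by norm_num) (by positivity) (by positivity)
    (by positivity) (by positivity) (by positivity) (by positivity) (by positivity)
    (coeff_mul_Gamma_div_Gamma_lt_coeff hdl hγ hTinf hcond) ω
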